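/- arXiv:2005.06854 — 2 statements merged into one kernel-verified Lean document; each statement's English description precedes it below -/
import Mathlib

section
/- (Block decomposition of ω^n-large sets.) Let n ≥ 1 and let X ⊆ ℕ be a finite ω^n-large set with k = min X ≥ 1. Then X \ {k} can be written as a disjoint union X_0 ⊔ ⋯ ⊔ X_{k−1}, where each X_i is ω^{n−1}-large and max X_i < min X_{i+1} for each i < k−1. -/
/-!
After its first step an `ω^(m+1)`-large set with minimum `k` leaves a set that is `ω^m · k`-large.
Along `α ++ β`, which encodes `β + α`, the process acts on `α` alone until `α` is exhausted, and
only then on `β`. Hence a list that brings `α ++ β` to `0` splits into an initial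
segment bringing `α` to `0` and a final segment bringing `β` to `0` (`foldl_append_split`).
Peeling off one copy of `ω^m` at a time produces the `k` blocks (`exists_blocks`). Elements left
over once `0` has been reached stay in the last block, since `0` is absorbing.
-/

/-- An ordinal `α < ω^ω` is represented by the list of exponents of its Cantor
normal form, *least significant first*: the list `[n₀, n₁, …, n_k]` with
`n₀ ≤ n₁ ≤ ⋯ ≤ n_k` represents the ordinal `ω^{n_k} + ⋯ + ω^{n₁} + ω^{n₀}`.
`largeStep α m` is the ordinal `α[m]`:  `0[m] = 0`; `α[m] = β` if `α = β + 1`;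
and `α[m] = β + ω^{n-1}·m` if `α = β + ω^n` with `n ≥ 1` (canonical decomposition). -/
def largeStep : List ℕ → ℕ → List ℕ
  | [], _ => []
  | 0 :: β, _ => β
  | (n + 1) :: β, m => List.replicate m n ++ β

/-- `IsAlphaLarge α X` says that the finite set `X = {x₀ < x₁ < ⋯ < x_{ℓ-1}} ⊆ ℕ`
is `α`-large, i.e. `α[x₀][x₁]⋯[x_{ℓ-1}] = 0`. -/
def IsAlphaLarge (α : List ℕ) (X : Finset ℕ) : Prop :=
  (X.sort (· ≤ ·)).foldl largeStep α = []

lemma largeStep_append {α : List ℕ} (hα : α ≠ []) (β : List ℕ) (x : ℕ) :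
    largeStep (α ++ β) x = largeStep α x ++ β := by
  match α with
  | [] => exact absurd rfl hα
  | 0 :: _ => rfl
  | (n + 1) :: γ => simp [largeStep]

lemma foldl_append_split (l α β : List ℕ) (h : l.foldl largeStep (α ++ β) = []) :
    ∃ l₁ l₂, l = l₁ ++ l₂ ∧ l₁.foldl largeStep α = [] ∧ l₂.foldl largeStep β = [] := by
  induction l generalizing α with
  | nil =>
    obtain ⟨rfl, rfl⟩ := List.append_eq_nil_iff.1 h
    exact ⟨[], [], rfl, rfl, rfl⟩
  | cons x t ih =>
    by_cases hα : α = []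
    · subst hα
      exact ⟨[], x :: t, rfl, rfl, h⟩
    · rw [List.foldl_cons, largeStep_append hα] at h
      obtain ⟨l₁, l₂, rfl, h₁, h₂⟩ := ih _ h
      exact ⟨x :: l₁, l₂, rfl, h₁, h₂⟩

/-- An increasing list that brings `ω^m · (k + 1)` to `0` consists of `k + 1` successive blocks, each
bringing `ω^m` to `0`. At least one copy of `ω^m` is needed for a block to hold the leftovers. -/
lemma exists_blocks (m k : ℕ) (l : List ℕ) (hl : l.Pairwise (· < ·))
    (h : l.foldl largeStep (List.replicate (k + 1) m) = []) :
    ∃ Y : ℕ → List ℕ,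
      (∀ x, x ∈ l ↔ ∃ i < k + 1, x ∈ Y i) ∧
      (∀ i j, i < j → j < k + 1 → ∀ a ∈ Y i, ∀ b ∈ Y j, a < b) ∧
      (∀ i < k + 1, (Y i).Pairwise (· < ·) ∧ (Y i).foldl largeStep [m] = []) := by
  induction k generalizing l with
  | zero =>
    refine ⟨fun _ => l, fun x => ⟨fun hx => ⟨0, by omega, hx⟩, fun ⟨_, _, hx⟩ => hx⟩, ?_, ?_⟩
    · intro i j _ _
      omega
    · exact fun _ _ => ⟨hl, h⟩
  | succ k ih =>
    obtain ⟨l₁, l₂, rfl, h₁, h₂⟩ := foldl_append_split l [m] (List.replicate (k + 1) m) h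
    obtain ⟨hl₁, hl₂, hlt⟩ := List.pairwise_append.1 hl
    obtain ⟨Y, hmem, hord, hlarge⟩ := ih l₂ hl₂ h₂
    refine ⟨fun i => Nat.casesOn i l₁ Y, fun x => ?_, ?_, ?_⟩
    · rw [List.mem_append, hmem]
      constructor
      · rintro (hx | ⟨i, hi, hx⟩)
        · exact ⟨0, by omega, hx⟩
        · exact ⟨i + 1, by omega, hx⟩
      · rintro ⟨_ | i, hi, hx⟩
        · exact Or.inl hx
        · exact Or.inr ⟨i, by omega, hx⟩
    · rintro (_ | i) (_ | j) hij hj a ha b hb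
      · omega
      · exact hlt a ha b ((hmem b).2 ⟨j, by omega, hb⟩)
      · omega
      · exact hord i j (by omega) (by omega) a ha b hb
    · rintro (_ | i) hi
      · exact ⟨hl₁, h₁⟩
      · exact hlarge i (by omega)

/-- Largeness of a finite set can be read off any increasing enumeration of it. -/
lemma isAlphaLarge_toFinset (α l : List ℕ) (hl : l.Pairwise (· < ·))
    (h : l.foldl largeStep α = []) : IsAlphaLarge α l.toFinset := by
  have hs : l.toFinset.sort (· ≤ ·) = l :=
    (List.toFinset_sort (· ≤ ·) (hl.imp fun h => h.ne)).2 (hl.imp fun h => h.le)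
  rw [IsAlphaLarge, hs, h]

/-- **Block decomposition of `ω^n`-large sets.** Let `n ≥ 1` and let `X ⊆ ℕ`
be a finite `ω^n`-large set with `k = min X ≥ 1`.  Then `X \ {k}` is a disjoint
union `X_0 ⊔ ⋯ ⊔ X_{k-1}` where each `X_i` is `ω^{n-1}`-large and
`max X_i < min X_{i+1}` for each `i < k - 1`. -/
theorem omegaPow_large_block_decomposition (n : ℕ) (hn : 1 ≤ n)
    (X : Finset ℕ) (hX : X.Nonempty) (hmin : 1 ≤ X.min' hX)
    (hlarge : IsAlphaLarge [n] X) :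
    ∃ Y : ℕ → Finset ℕ,
      X.erase (X.min' hX) = (Finset.range (X.min' hX)).biUnion Y ∧
      (∀ i < X.min' hX, ∀ j < X.min' hX, i ≠ j → Disjoint (Y i) (Y j)) ∧
      (∀ i < X.min' hX, IsAlphaLarge [n - 1] (Y i)) ∧
      (∀ i, i + 1 < X.min' hX → ∀ a ∈ Y i, ∀ b ∈ Y (i + 1), a < b) := by
  obtain ⟨m, rfl⟩ : ∃ m, n = m + 1 := ⟨n - 1, by omega⟩
  have hmem : ∀ x, x ∈ X.sort (· ≤ ·) ↔ x ∈ X := fun x => Finset.mem_sort _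
  have hsort : (X.sort (· ≤ ·)).Pairwise (· < ·) := (Finset.sortedLT_sort X).pairwise
  unfold IsAlphaLarge at hlarge
  generalize X.sort (· ≤ ·) = s at hmem hsort hlarge
  cases s with
  | nil => simp at hlarge
  | cons x t =>
    obtain ⟨hxt, ht⟩ := List.pairwise_cons.1 hsort
    have hx : X.min' hX = x := by
      refine le_antisymm (X.min'_le x ((hmem x).1 (by simp))) ?_
      rcases List.mem_cons.1 ((hmem _).2 (X.min'_mem hX)) with h | h
      · exact h.ge
      · exact (hxt _ h).le
    rw [hx] at hmin ⊢
    obtain ⟨k, rfl⟩ : ∃ k, x = k + 1 := ⟨x - 1, by omega⟩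
    simp only [List.foldl_cons, largeStep, List.append_nil] at hlarge
    obtain ⟨Y, hY, hord, hblock⟩ := exists_blocks m k t ht hlarge
    refine ⟨fun i => (Y i).toFinset, ?_, ?_, ?_, ?_⟩
    · ext a
      simp only [Finset.mem_erase, Finset.mem_biUnion, Finset.mem_range, List.mem_toFinset,
        ← hY, ← hmem, List.mem_cons]
      constructor
      · rintro ⟨hne, h | h⟩
        · exact absurd h hne
        · exact h
      · exact fun h => ⟨(hxt a h).ne', Or.inr h⟩
    · intro i hi j hj hij
      rw [Finset.disjoint_left]
      intro a hai haj
      rw [List.mem_toFinset] at hai haj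
      rcases lt_or_gt_of_ne hij with h | h
      · exact lt_irrefl a (hord i j h hj a hai a haj)
      · exact lt_irrefl a (hord j i h hi a haj a hai)
    · exact fun i hi => isAlphaLarge_toFinset _ _ (hblock i hi).1 (hblock i hi).2
    · intro i hi a ha b hb
      exact hord i (i + 1) (by omega) hi a (List.mem_toFinset.1 ha) b (List.mem_toFinset.1 hb)
end

section
/- (Finite Ramsey theorem for pairs in terms of α-largeness.) For every natural number n there exists a natural number m such that: for every finite set X ⊆ ℕ with min X ≥ 3, if X is ω^m-large, then every colouring f : [X]² → 2 has an ω^n-large homogeneous subset H ⊆ X. -/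
/-! ### A monotone version of largeness -/

/-- A version of `ω^n`-largeness that is monotone in the set. `Lg 0` is nonemptiness, and
`Lg (n + 1) X` asks for a point `x ∈ X` and at least `x` pairwise consecutive `Lg n` subsets of `X`
above `x`. The blocks are indexed by an arbitrary finite set `I ⊆ ℕ`, so that passing to a
subfamily of the blocks requires no reindexing. -/
def Lg : ℕ → Finset ℕ → Prop
  | 0, X => X.Nonempty
  | n + 1, X => ∃ x ∈ X, ∃ (I : Finset ℕ) (B : ℕ → Finset ℕ), x ≤ I.card ∧
      (∀ i ∈ I, B i ⊆ X ∧ Lg n (B i) ∧ ∀ b ∈ B i, x < b) ∧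
      (∀ i ∈ I, ∀ j ∈ I, i < j → ∀ a ∈ B i, ∀ b ∈ B j, a < b)

lemma Lg.mono {n : ℕ} {X Y : Finset ℕ} (h : Lg n X) (hXY : X ⊆ Y) : Lg n Y := by
  cases n with
  | zero => exact Finset.Nonempty.mono hXY h
  | succ n =>
    obtain ⟨x, hx, I, B, hc, hB, hlt⟩ := h
    exact ⟨x, hXY hx, I, B, hc, fun i hi => ⟨(hB i hi).1.trans hXY, (hB i hi).2⟩, hlt⟩

lemma Lg.nonempty {n : ℕ} {X : Finset ℕ} (h : Lg n X) : X.Nonempty := by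
  cases n with
  | zero => exact h
  | succ n =>
    obtain ⟨x, hx, _⟩ := h
    exact ⟨x, hx⟩

lemma Lg.pred {n : ℕ} {X : Finset ℕ} (h3 : ∀ x ∈ X, 3 ≤ x) (h : Lg (n + 1) X) : Lg n X := by
  obtain ⟨x, hx, I, B, hc, hB, -⟩ := h
  have := h3 x hx
  obtain ⟨i, hi⟩ : I.Nonempty := Finset.card_pos.1 (by omega)
  exact (hB i hi).2.1.mono (hB i hi).1

lemma Lg.of_le {m n : ℕ} {X : Finset ℕ} (h3 : ∀ x ∈ X, 3 ≤ x) (hmn : m ≤ n) (h : Lg n X) :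
    Lg m X := by
  induction n, hmn using Nat.le_induction with
  | base => exact h
  | succ n _ ih => exact ih (h.pred h3)

/-- Concatenated ordinals are exhausted one after the other. -/
lemma foldl_split (l : List ℕ) : ∀ α β : List ℕ, l.foldl largeStep (α ++ β) = [] →
    ∃ l₁ l₂, l = l₁ ++ l₂ ∧ l₁.foldl largeStep α = [] ∧ l₂.foldl largeStep β = [] := by
  induction l with
  | nil =>
    intro α β h
    simp only [List.foldl_nil, List.append_eq_nil_iff] at h
    exact ⟨[], [], rfl, h.1, h.2⟩
  | cons x l ih =>
    intro α β h
    cases α with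
    | nil => exact ⟨[], x :: l, rfl, rfl, h⟩
    | cons a α =>
      have hs : largeStep (a :: α ++ β) x = largeStep (a :: α) x ++ β := by
        cases a <;> simp [largeStep]
      rw [List.foldl_cons, hs] at h
      obtain ⟨l₁, l₂, rfl, h₁, h₂⟩ := ih _ _ h
      exact ⟨x :: l₁, l₂, rfl, h₁, h₂⟩

lemma lg_of_foldl (n : ℕ) : ∀ l : List ℕ, l.Pairwise (· < ·) →
    l.foldl largeStep [n] = [] → Lg n l.toFinset := by
  induction n with
  | zero =>
    intro l _ h
    cases l with
    | nil => simp at h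
    | cons x l => exact ⟨x, by simp⟩
  | succ n ih =>
    have key : ∀ (k : ℕ) (l : List ℕ), l.Pairwise (· < ·) →
        l.foldl largeStep (List.replicate k n) = [] → ∃ B : ℕ → Finset ℕ,
          (∀ i < k, B i ⊆ l.toFinset ∧ Lg n (B i)) ∧
          ∀ i < k, ∀ j < k, i < j → ∀ a ∈ B i, ∀ b ∈ B j, a < b := by
      intro k
      induction k with
      | zero => intro l _ _; exact ⟨fun _ => ∅, by simp, by simp⟩
      | succ k ihk =>
        intro l hl h
        rw [List.replicate_succ, ← List.singleton_append] at h
        obtain ⟨l₁, l₂, rfl, h₁, h₂⟩ := foldl_split _ _ _ h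
        rw [List.pairwise_append] at hl
        obtain ⟨B, hB, hlt⟩ := ihk l₂ hl.2.1 h₂
        have sub : ∀ i < k, ∀ a ∈ B i, a ∈ l₂ := fun i hi a ha =>
          List.mem_toFinset.1 ((hB i hi).1 ha)
        refine ⟨fun i => Nat.casesOn i l₁.toFinset B, ?_, ?_⟩
        · rintro (_ | i) hi
          · exact ⟨fun a ha => by simp at ha ⊢; exact Or.inl ha, ih l₁ hl.1 h₁⟩
          · exact ⟨fun a ha => by
              have := sub i (by omega) a ha
              simp [this], (hB i (by omega)).2⟩
        · rintro (_ | i) hi (_ | j) hj hij a ha b hb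
          · omega
          · exact hl.2.2 a (List.mem_toFinset.1 ha) b (sub j (by omega) b hb)
          · omega
          · exact hlt i (by omega) j (by omega) (by omega) a ha b hb
    intro l hl h
    cases l with
    | nil => simp at h
    | cons x l =>
      rw [List.pairwise_cons] at hl
      have h' : l.foldl largeStep (List.replicate x n) = [] := by
        simpa [largeStep] using h
      obtain ⟨B, hB, hlt⟩ := key x l hl.2 h'
      refine ⟨x, by simp, Finset.range x, B, by simp, ?_, ?_⟩
      · intro i hi
        have := hB i (Finset.mem_range.1 hi)
        refine ⟨fun a ha => ?_, this.2, fun b hb => hl.1 b (List.mem_toFinset.1 (this.1 hb))⟩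
        have := this.1 ha
        simp at this ⊢
        exact Or.inr this
      · intro i hi j hj
        exact hlt i (Finset.mem_range.1 hi) j (Finset.mem_range.1 hj)

/-- A set satisfying `Lg n` contains an increasing sequence that uses up `ω^n` exactly. The
exactness (an arbitrary remaining ordinal `β` is left untouched) is what allows the sequences of
consecutive blocks to be concatenated. -/
lemma exists_list_of_lg (n : ℕ) : ∀ X : Finset ℕ, Lg n X →
    ∃ l : List ℕ, l.Pairwise (· < ·) ∧ (∀ a ∈ l, a ∈ X) ∧
      ∀ β, l.foldl largeStep (n :: β) = β := by
  induction n with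
  | zero =>
    rintro X ⟨x, hx⟩
    exact ⟨[x], by simp, by simpa using hx, fun β => rfl⟩
  | succ n ih =>
    rintro X ⟨x, hx, I, B, hc, hB, hlt⟩
    have key : ∀ J : Finset ℕ, J ⊆ I → ∃ l : List ℕ, l.Pairwise (· < ·) ∧
        (∀ a ∈ l, ∃ i ∈ J, a ∈ B i) ∧
        ∀ β, l.foldl largeStep (List.replicate J.card n ++ β) = β := by
      intro J
      induction J using Finset.induction_on_min with
      | empty => intro _; exact ⟨[], by simp, by simp, by simp⟩
      | insert i J hi ihJ =>
        intro hJ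
        obtain ⟨l, h₁, h₂, h₃⟩ := ihJ ((Finset.subset_insert _ _).trans hJ)
        have hiI : i ∈ I := hJ (Finset.mem_insert_self _ _)
        obtain ⟨l', h₁', h₂', h₃'⟩ := ih (B i) (hB i hiI).2.1
        refine ⟨l' ++ l, ?_, ?_, ?_⟩
        · rw [List.pairwise_append]
          refine ⟨h₁', h₁, fun a ha b hb => ?_⟩
          obtain ⟨j, hj, hbj⟩ := h₂ b hb
          exact hlt i hiI j (hJ (Finset.mem_insert_of_mem hj)) (hi j hj) a (h₂' a ha) b hbj
        · intro a ha
          rcases List.mem_append.1 ha with ha | ha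
          · exact ⟨i, Finset.mem_insert_self _ _, h₂' a ha⟩
          · obtain ⟨j, hj, haj⟩ := h₂ a ha
            exact ⟨j, Finset.mem_insert_of_mem hj, haj⟩
        · intro β
          have hni : i ∉ J := fun h => lt_irrefl _ (hi i h)
          rw [Finset.card_insert_of_notMem hni, List.replicate_succ, List.cons_append,
            List.foldl_append, h₃', h₃]
    obtain ⟨J, hJ, hJc⟩ := Finset.exists_subset_card_eq hc
    obtain ⟨l, h₁, h₂, h₃⟩ := key J hJ
    refine ⟨x :: l, ?_, ?_, ?_⟩
    · rw [List.pairwise_cons]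
      refine ⟨fun a ha => ?_, h₁⟩
      obtain ⟨i, hi, hai⟩ := h₂ a ha
      exact (hB i (hJ hi)).2.2 a hai
    · intro a ha
      rcases List.mem_cons.1 ha with rfl | ha
      · exact hx
      · obtain ⟨i, hi, hai⟩ := h₂ a ha
        exact (hB i (hJ hi)).1 hai
    · intro β
      rw [List.foldl_cons]
      simpa [largeStep, hJc] using h₃ β

lemma lg_of_isAlphaLarge {n : ℕ} {X : Finset ℕ} (h : IsAlphaLarge [n] X) : Lg n X := by
  have := lg_of_foldl n (X.sort (· ≤ ·)) X.sortedLT_sort.pairwise h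
  simpa using this

lemma exists_isAlphaLarge_of_lg {n : ℕ} {X : Finset ℕ} (h : Lg n X) :
    ∃ H ⊆ X, IsAlphaLarge [n] H := by
  obtain ⟨l, h₁, h₂, h₃⟩ := exists_list_of_lg n X h
  refine ⟨l.toFinset, fun a ha => h₂ a (List.mem_toFinset.1 ha), ?_⟩
  have : l.toFinset.sort (· ≤ ·) = l :=
    (List.toFinset_sort (· ≤ ·) (h₁.imp fun h => h.ne)).2 (h₁.imp fun h => h.le)
  rw [IsAlphaLarge, this]
  exact h₃ []

/-! ### Sparse subsets -/

/-- Later elements are more than exponentially larger than earlier ones. -/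
def Sparse (X : Finset ℕ) : Prop := ∀ x ∈ X, ∀ y ∈ X, x < y → 4 ^ x < y

lemma Sparse.mono {X Y : Finset ℕ} (h : Sparse Y) (hXY : X ⊆ Y) : Sparse X :=
  fun x hx y hy => h x (hXY hx) y (hXY hy)

lemma exists_double {X : Finset ℕ} (h : Lg 1 X) : ∃ u ∈ X, ∃ v ∈ X, 2 * u ≤ v := by
  obtain ⟨x, hx, I, B, hc, hB, hlt⟩ := h
  have key : ∀ J : Finset ℕ, J ⊆ I →
      ∃ v ∈ X, x + J.card ≤ v ∧ (v = x ∨ ∃ i ∈ J, v ∈ B i) := by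
    intro J
    induction J using Finset.induction_on_max with
    | empty => intro _; exact ⟨x, hx, by simp, Or.inl rfl⟩
    | insert i J hi ihJ =>
      intro hJ
      obtain ⟨v, hv, hle, h⟩ := ihJ ((Finset.subset_insert _ _).trans hJ)
      have hiI : i ∈ I := hJ (Finset.mem_insert_self _ _)
      obtain ⟨w, hw⟩ := (hB i hiI).2.1.nonempty
      have hvw : v < w := by
        rcases h with rfl | ⟨j, hj, hvj⟩
        · exact (hB i hiI).2.2 w hw
        · exact hlt j (hJ (Finset.mem_insert_of_mem hj)) i hiI (hi j hj) v hvj w hw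
      have hni : i ∉ J := fun h => lt_irrefl _ (hi i h)
      rw [Finset.card_insert_of_notMem hni]
      exact ⟨w, (hB i hiI).1 hw, by omega, Or.inr ⟨i, Finset.mem_insert_self _ _, hw⟩⟩
  obtain ⟨v, hv, hle, -⟩ := key I subset_rfl
  exact ⟨x, hx, v, hv, by omega⟩

lemma exists_exp {X : Finset ℕ} (h : Lg 2 X) : ∃ u ∈ X, ∃ v ∈ X, u * 2 ^ u ≤ v := by
  obtain ⟨x, hx, I, B, hc, hB, hlt⟩ := h
  have key : ∀ J : Finset ℕ, J ⊆ I →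
      ∃ v ∈ X, x * 2 ^ J.card ≤ v ∧ (v = x ∨ ∃ i ∈ J, v ∈ B i) := by
    intro J
    induction J using Finset.induction_on_max with
    | empty => intro _; exact ⟨x, hx, by simp, Or.inl rfl⟩
    | insert i J hi ihJ =>
      intro hJ
      obtain ⟨v, hv, hle, h⟩ := ihJ ((Finset.subset_insert _ _).trans hJ)
      have hiI : i ∈ I := hJ (Finset.mem_insert_self _ _)
      obtain ⟨u, hu, w, hw, huw⟩ := exists_double (hB i hiI).2.1
      have hvu : v < u := by
        rcases h with rfl | ⟨j, hj, hvj⟩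
        · exact (hB i hiI).2.2 u hu
        · exact hlt j (hJ (Finset.mem_insert_of_mem hj)) i hiI (hi j hj) v hvj u hu
      have hni : i ∉ J := fun h => lt_irrefl _ (hi i h)
      rw [Finset.card_insert_of_notMem hni, pow_succ]
      exact ⟨w, (hB i hiI).1 hw, by nlinarith, Or.inr ⟨i, Finset.mem_insert_self _ _, hw⟩⟩
  obtain ⟨v, hv, hle, -⟩ := key I subset_rfl
  exact ⟨x, hx, v, hv,
    (Nat.mul_le_mul_left x (Nat.pow_le_pow_right (by norm_num) hc)).trans hle⟩

/-- Two consecutive blocks inside a set satisfying `Lg (n + 1)`. -/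
lemma Lg.exists_two {n : ℕ} {X : Finset ℕ} (h3 : ∀ x ∈ X, 3 ≤ x) (h : Lg (n + 1) X) :
    ∃ C ⊆ X, ∃ D ⊆ X, Lg n C ∧ Lg n D ∧ ∀ c ∈ C, ∀ d ∈ D, c < d := by
  obtain ⟨x, hx, I, B, hc, hB, hlt⟩ := h
  have := h3 x hx
  obtain ⟨i, hi, j, hj, hij⟩ := Finset.one_lt_card.1 (show 1 < I.card by omega)
  rcases lt_or_gt_of_ne hij with h | h
  · exact ⟨B i, (hB i hi).1, B j, (hB j hj).1, (hB i hi).2.1, (hB j hj).2.1, hlt i hi j hj h⟩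
  · exact ⟨B j, (hB j hj).1, B i, (hB i hi).1, (hB j hj).2.1, (hB i hi).2.1, hlt j hj i hi h⟩

lemma exists_gap {X : Finset ℕ} (h3 : ∀ x ∈ X, 3 ≤ x) (h : Lg 3 X) :
    ∃ u ∈ X, ∃ v ∈ X, 4 ^ u < v := by
  obtain ⟨C, hC, D, hD, hlC, hlD, hlt⟩ := h.exists_two h3
  obtain ⟨u, hu, v, hv, huv⟩ := exists_exp hlC
  obtain ⟨u', hu', v', hv', huv'⟩ := exists_exp hlD
  refine ⟨u, hC hu, v', hD hv', ?_⟩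
  have h₁ := hlt v hv u' hu'
  have h₂ := h3 u (hC hu)
  have h₃ : u < 2 ^ u := Nat.lt_two_pow_self
  have h₄ : 2 * u ≤ u' := by nlinarith
  have h₅ : 4 ^ u ≤ 2 ^ u' := by
    rw [show (4 : ℕ) = 2 ^ 2 by norm_num, ← pow_mul]
    exact Nat.pow_le_pow_right (by norm_num) h₄
  have h₆ : 0 < 2 ^ u' := by positivity
  nlinarith

lemma exists_sparse (m : ℕ) : ∀ X : Finset ℕ, (∀ x ∈ X, 3 ≤ x) → Lg (2 * m + 3) X →
    ∃ Y ⊆ X, Sparse Y ∧ Lg m Y := by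
  induction m with
  | zero =>
    intro X _ h
    obtain ⟨x, hx⟩ := h.nonempty
    refine ⟨{x}, by simpa using hx, ?_, ⟨x, by simp⟩⟩
    intro a ha b hb hab
    simp only [Finset.mem_singleton] at ha hb
    omega
  | succ m ih =>
    rintro X h3 ⟨x, hx, I, B, hc, hB, hlt⟩
    -- In each block, one sub-block serves as a gap that separates the thinned block from
    -- everything below it.
    have hY : ∀ i ∈ I, ∃ Y ⊆ B i, Sparse Y ∧ Lg m Y ∧ ∃ u ∈ B i, ∀ y ∈ Y, 4 ^ u < y := by
      intro i hi
      have h3' : ∀ b ∈ B i, 3 ≤ b := fun b hb => h3 b ((hB i hi).1 hb)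
      obtain ⟨C, hC, D, hD, hlC, hlD, hCD⟩ := (hB i hi).2.1.exists_two h3'
      obtain ⟨u, hu, v, hv, huv⟩ := exists_gap (fun c hc => h3' c (hC hc))
        (hlC.of_le (fun c hc => h3' c (hC hc)) (by omega))
      obtain ⟨Y, hYD, hYs, hYl⟩ := ih D (fun c hc => h3' c (hD hc)) hlD
      exact ⟨Y, hYD.trans hD, hYs, hYl, u, hC hu, fun y hy =>
        huv.trans (hCD v hv y (hYD hy))⟩
    choose! Y hYB hYs hYl u hu huY using hY
    have hxY : ∀ i ∈ I, ∀ y ∈ Y i, 4 ^ x < y := fun i hi y hy =>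
      (Nat.pow_lt_pow_right (by norm_num) ((hB i hi).2.2 _ (hu i hi))).trans (huY i hi y hy)
    refine ⟨insert x (I.biUnion Y), ?_, ?_, ?_⟩
    · intro a ha
      rcases Finset.mem_insert.1 ha with rfl | ha
      · exact hx
      · obtain ⟨i, hi, hai⟩ := Finset.mem_biUnion.1 ha
        exact (hB i hi).1 (hYB i hi hai)
    · intro a ha b hb hab
      rcases Finset.mem_insert.1 ha with rfl | ha
      · rcases Finset.mem_insert.1 hb with rfl | hb
        · omega
        · obtain ⟨i, hi, hbi⟩ := Finset.mem_biUnion.1 hb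
          exact hxY i hi b hbi
      · obtain ⟨i, hi, hai⟩ := Finset.mem_biUnion.1 ha
        rcases Finset.mem_insert.1 hb with rfl | hb
        · have := (hB i hi).2.2 a (hYB i hi hai)
          omega
        · obtain ⟨j, hj, hbj⟩ := Finset.mem_biUnion.1 hb
          rcases lt_trichotomy i j with h | rfl | h
          · exact (Nat.pow_lt_pow_right (by norm_num)
              (hlt i hi j hj h a (hYB i hi hai) _ (hu j hj))).trans (huY j hj b hbj)
          · exact hYs i hi a hai b hbj hab
          · have := hlt j hj i hi h b (hYB j hj hbj) a (hYB i hi hai)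
            omega
    · refine ⟨x, Finset.mem_insert_self _ _, I, Y, hc, fun i hi => ⟨?_, hYl i hi, ?_⟩, ?_⟩
      · exact (Finset.subset_biUnion_of_mem Y hi).trans (Finset.subset_insert _ _)
      · exact fun b hb => (hB i hi).2.2 b (hYB i hi hb)
      · exact fun i hi j hj hij a ha b hb =>
          hlt i hi j hj hij a (hYB i hi ha) b (hYB j hj hb)

/-! ### The pigeonhole principle and uniform blocks -/

/-- Pigeonhole principle for sparse sets. For the successor step, two of the blocks have the same
most frequent colour `k` for their sub-blocks; a point of colour `k` in the earlier block, together
with the sub-blocks of colour `k` in the later one, is a witness. -/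
lemma pigeonhole {κ : Type*} [DecidableEq κ] (n : ℕ) : ∀ (X : Finset ℕ) (C : Finset κ) (c : ℕ → κ),
    Sparse X → (∀ x ∈ X, C.card < x) → (∀ x ∈ X, c x ∈ C) → Lg (2 * n) X →
    ∃ k ∈ C, Lg n (X.filter fun x => c x = k) := by
  induction n with
  | zero =>
    rintro X C c - - hc ⟨x, hx⟩
    exact ⟨c x, hc x hx, x, by simp [hx]⟩
  | succ n ih =>
    rintro X C c hs hC hcC ⟨x, hx, I, B, hxI, hB, hlt⟩
    have : Nonempty κ := ⟨c x⟩
    have hi : ∀ i ∈ I, ∃ k ∈ C, ∃ (T : Finset ℕ) (D : ℕ → Finset ℕ), T.Nonempty ∧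
        (∃ y ∈ B i, y ≤ C.card * T.card) ∧
        (∀ j ∈ T, D j ⊆ B i ∧ Lg n ((D j).filter fun x => c x = k)) ∧
        (∀ j ∈ T, ∀ j' ∈ T, j < j' → ∀ a ∈ D j, ∀ b ∈ D j', a < b) := by
      intro i hi
      obtain ⟨y, hy, J, D, hyJ, hD, hDlt⟩ := (hB i hi).2.1
      have hBX := (hB i hi).1
      have hk : ∀ j ∈ J, ∃ k ∈ C, Lg n ((D j).filter fun x => c x = k) := by
        intro j hj
        have hDX := (hD j hj).1.trans hBX
        exact ih (D j) C c (hs.mono hDX) (fun a ha => hC a (hDX ha))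
          (fun a ha => hcC a (hDX ha)) (hD j hj).2.1
      choose! e heC hel using hk
      have hyC := hC y (hBX hy)
      have hJ : J.Nonempty := Finset.card_pos.1 (by omega)
      have hCne : C.Nonempty := ⟨_, heC _ hJ.choose_spec⟩
      obtain ⟨k, hkC, hk⟩ : ∃ k ∈ C, J.card ≤ C.card * (J.filter fun j => e j = k).card := by
        by_contra! hcon
        have h₁ := Finset.card_eq_sum_card_fiberwise heC
        have h₂ : ∑ k ∈ C, C.card * (J.filter fun j => e j = k).card < ∑ k ∈ C, J.card :=
          Finset.sum_lt_sum_of_nonempty hCne hcon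
        rw [← Finset.mul_sum, ← h₁, Finset.sum_const, smul_eq_mul] at h₂
        exact lt_irrefl _ h₂
      refine ⟨k, hkC, J.filter fun j => e j = k, D, ?_, ⟨y, hy, hyJ.trans hk⟩, ?_, ?_⟩
      · rw [← Finset.card_pos]
        by_contra! h0
        have : (J.filter fun j => e j = k).card = 0 := by omega
        rw [this] at hk
        omega
      · intro j hj
        obtain ⟨hjJ, rfl⟩ := Finset.mem_filter.1 hj
        exact ⟨(hD j hjJ).1, hel j hjJ⟩
      · exact fun j hj j' hj' =>
          hDlt j (Finset.mem_filter.1 hj).1 j' (Finset.mem_filter.1 hj').1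
    choose! k hkC T D hT hy hD hDlt using hi
    obtain ⟨i, hi, j, hj, hij, hkij⟩ : ∃ i ∈ I, ∃ j ∈ I, i < j ∧ k i = k j := by
      obtain ⟨i, hi, j, hj, hne, he⟩ := Finset.exists_ne_map_eq_of_card_lt_of_maps_to
        ((hC x hx).trans_le hxI) hkC
      rcases lt_or_gt_of_ne hne with h | h
      · exact ⟨i, hi, j, hj, h, he⟩
      · exact ⟨j, hj, i, hi, h, he.symm⟩
    obtain ⟨t, ht⟩ := hT i hi
    obtain ⟨w, hw⟩ := (hD i hi t ht).2.nonempty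
    obtain ⟨hwD, hwk⟩ := Finset.mem_filter.1 hw
    have hwB := (hD i hi t ht).1 hwD
    have hwX := (hB i hi).1 hwB
    obtain ⟨y, hyB, hyT⟩ := hy j hj
    have hwy := hs w hwX y ((hB j hj).1 hyB) (hlt i hi j hj hij w hwB y hyB)
    refine ⟨k i, hkC i hi, w, by simp [hwX, hwk], T j,
      fun s => (D j s).filter fun x => c x = k j, ?_, ?_, ?_⟩
    · -- `|C| * w ≤ w ^ 2 ≤ 4 ^ w < y ≤ |C| * |T j|`
      have h₁ := hC w hwX
      have h₂ : w < 2 ^ w := Nat.lt_two_pow_self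
      have h₃ : 4 ^ w = 2 ^ w * 2 ^ w := by rw [← mul_pow]; norm_num
      by_contra! h₄
      have h₅ : C.card * (T j).card ≤ w * w := Nat.mul_le_mul h₁.le h₄.le
      have h₆ : w * w ≤ 2 ^ w * 2 ^ w := Nat.mul_le_mul h₂.le h₂.le
      omega
    · intro s hs'
      have h := hD j hj s hs'
      refine ⟨fun a ha => ?_, h.2, fun b hb => ?_⟩
      · obtain ⟨ha, hak⟩ := Finset.mem_filter.1 ha
        exact Finset.mem_filter.2 ⟨(hB j hj).1 (h.1 ha), hak.trans hkij.symm⟩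
      · exact hlt i hi j hj hij w hwB b (h.1 (Finset.mem_filter.1 hb).1)
    · exact fun s hs s' hs' hss a ha b hb =>
        hDlt j hj s hs s' hs' hss a (Finset.mem_filter.1 ha).1 b (Finset.mem_filter.1 hb).1

/-- A block of a sparse set can be thinned so that its points are indistinguishable from below. -/
lemma exists_uniform (f : ℕ → ℕ → Fin 2) (n : ℕ) {X V : Finset ℕ} (hs : Sparse X)
    (h3 : ∀ x ∈ X, 3 ≤ x) (hV : V ⊆ X) (hl : Lg (2 * n) V) :
    ∃ W ⊆ V, Lg n W ∧ ∀ u ∈ X, (∀ v ∈ V, u < v) → ∀ w ∈ W, ∀ w' ∈ W, f u w = f u w' := by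
  classical
  set U := X.filter fun u => ∀ v ∈ V, u < v with hU
  -- The colour of `w` is its type over `U`; there are `2 ^ |U| ≤ 2 ^ (max U + 1) ≤ 4 ^ max U` types.
  have hcard : ∀ w ∈ V, U.powerset.card < w := by
    intro w hw
    rw [Finset.card_powerset]
    rcases U.eq_empty_or_nonempty with h | h
    · have := h3 w (hV hw)
      rw [h, Finset.card_empty, pow_zero]
      omega
    · have hm := U.max'_mem h
      obtain ⟨hmX, hmV⟩ := Finset.mem_filter.1 hm
      have h₁ := hs _ hmX w (hV hw) (hmV w hw)
      have h₂ : U.card ≤ U.max' h + 1 := by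
        have : U ⊆ Finset.range (U.max' h + 1) := fun a ha =>
          Finset.mem_range.2 (Nat.lt_succ_of_le (U.le_max' a ha))
        simpa using Finset.card_le_card this
      have h₃ := h3 _ hmX
      calc 2 ^ U.card ≤ 2 ^ (2 * U.max' h) := Nat.pow_le_pow_right (by norm_num) (by omega)
        _ = 4 ^ U.max' h := by rw [pow_mul]; norm_num
        _ < w := h₁
  obtain ⟨k, -, hk⟩ := pigeonhole n V U.powerset (fun w => U.filter fun u => f u w = 0)
    (hs.mono hV) hcard (fun w _ => Finset.mem_powerset.2 (Finset.filter_subset _ _)) hl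
  refine ⟨_, Finset.filter_subset _ _, hk, ?_⟩
  intro u hu huV w hw w' hw'
  have hww : (U.filter fun u => f u w = 0) = U.filter fun u => f u w' = 0 :=
    (Finset.mem_filter.1 hw).2.trans (Finset.mem_filter.1 hw').2.symm
  have huU : u ∈ U := Finset.mem_filter.2 ⟨hu, huV⟩
  have := congrArg (u ∈ ·) hww
  simp only [Finset.mem_filter, huU, true_and, eq_iff_iff] at this
  omega

/-! ### Families of blocks with one crossing colour -/

/-- The finite Ramsey theorem for pairs and two colours. -/
lemma finite_ramsey (F : ℕ → ℕ → Fin 2) (s : ℕ) : ∀ (p q : ℕ) (S : Finset ℕ), p + q = s →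
    2 ^ s ≤ S.card →
    (∃ T ⊆ S, p ≤ T.card ∧ ∀ i ∈ T, ∀ j ∈ T, i < j → F i j = 0) ∨
    (∃ T ⊆ S, q ≤ T.card ∧ ∀ i ∈ T, ∀ j ∈ T, i < j → F i j = 1) := by
  induction s with
  | zero =>
    intro p q S hpq _
    exact Or.inl ⟨∅, by simp, by simp; omega, by simp⟩
  | succ s ih =>
    intro p q S hpq hS
    rcases p with _ | p
    · exact Or.inl ⟨∅, by simp, by simp, by simp⟩
    rcases q with _ | q
    · exact Or.inr ⟨∅, by simp, by simp, by simp⟩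
    have hne : S.Nonempty := Finset.card_pos.1 (lt_of_lt_of_le (by positivity) hS)
    set a := S.min' hne with ha
    have haS : a ∈ S := S.min'_mem hne
    have hmin : ∀ b ∈ S.erase a, a < b := fun b hb =>
      lt_of_le_of_ne (S.min'_le b (Finset.mem_of_mem_erase hb)) (Finset.ne_of_mem_erase hb).symm
    have extend : ∀ (d : Fin 2) (r : ℕ) (T : Finset ℕ),
        T ⊆ (S.erase a).filter (fun b => F a b = d) → r ≤ T.card →
        (∀ i ∈ T, ∀ j ∈ T, i < j → F i j = d) →
        ∃ T ⊆ S, r + 1 ≤ T.card ∧ ∀ i ∈ T, ∀ j ∈ T, i < j → F i j = d := by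
      intro d r T hT hr hh
      have hT' : ∀ b ∈ T, b ∈ S.erase a ∧ F a b = d := fun b hb => Finset.mem_filter.1 (hT hb)
      have haT : a ∉ T := fun h => lt_irrefl _ (hmin a (hT' a h).1)
      refine ⟨insert a T, ?_, ?_, ?_⟩
      · exact Finset.insert_subset haS fun b hb => Finset.mem_of_mem_erase (hT' b hb).1
      · rw [Finset.card_insert_of_notMem haT]; omega
      · intro i hi j hj hij
        rcases Finset.mem_insert.1 hi with rfl | hi
        · rcases Finset.mem_insert.1 hj with rfl | hj
          · omega
          · exact (hT' j hj).2
        · rcases Finset.mem_insert.1 hj with rfl | hj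
          · have := hmin i (hT' i hi).1
            omega
          · exact hh i hi j hj hij
    have hsplit : ((S.erase a).filter fun b => F a b = 0).card +
        ((S.erase a).filter fun b => F a b = 1).card = S.card - 1 := by
      rw [← Finset.card_erase_of_mem haS,
        ← Finset.card_filter_add_card_filter_not (s := S.erase a) (fun b => F a b = 0)]
      congr 2
      apply Finset.filter_congr
      intro b _
      omega
    rw [pow_succ] at hS
    by_cases h0 : 2 ^ s ≤ ((S.erase a).filter fun b => F a b = 0).card
    · rcases ih p (q + 1) _ (by omega) h0 with ⟨T, hT, hr, hh⟩ | ⟨T, hT, hr, hh⟩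
      · exact Or.inl (extend 0 p T hT hr hh)
      · exact Or.inr ⟨T, hT.trans ((Finset.filter_subset _ _).trans (Finset.erase_subset _ _)),
          hr, hh⟩
    · rcases ih (p + 1) q ((S.erase a).filter fun b => F a b = 1) (by omega) (by omega) with
        ⟨T, hT, hr, hh⟩ | ⟨T, hT, hr, hh⟩
      · exact Or.inl ⟨T, hT.trans ((Finset.filter_subset _ _).trans (Finset.erase_subset _ _)),
          hr, hh⟩
      · exact Or.inr (extend 1 q T hT hr hh)

lemma exists_homogeneous_blocks (f : ℕ → ℕ → Fin 2) (m N : ℕ) {X : Finset ℕ} (hs : Sparse X)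
    (h3 : ∀ x ∈ X, 3 ≤ x) (hN : ∀ x ∈ X, 4 ^ N < x) (hl : Lg (4 * m + 1) X) :
    ∃ (I : Finset ℕ) (B : ℕ → Finset ℕ) (c : Fin 2), N ≤ I.card ∧
      (∀ i ∈ I, B i ⊆ X ∧ Lg m (B i)) ∧
      (∀ i ∈ I, ∀ j ∈ I, i < j → ∀ a ∈ B i, ∀ b ∈ B j, a < b ∧ f a b = c) := by
  obtain ⟨z, hz, I₀, V, hzI, hV, hlt⟩ := hl
  obtain ⟨I, hI, hIz⟩ := Finset.exists_subset_card_eq hzI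
  have h₁ : ∀ i ∈ I, ∃ W ⊆ V i, Lg (2 * m) W ∧ ∀ u ∈ X, (∀ v ∈ V i, u < v) →
      ∀ w ∈ W, ∀ w' ∈ W, f u w = f u w' := fun i hi =>
    exists_uniform f (2 * m) hs h3 (hV i (hI hi)).1
      (by rw [show 2 * (2 * m) = 4 * m by ring]; exact (hV i (hI hi)).2.1)
  choose! W hWV hWl hWu using h₁
  choose! r hr using fun i (hi : i ∈ I) => (hWl i hi).nonempty
  -- Thin again, so that the points of one block agree on the colours towards the other blocks,
  -- which are represented by the points `r j`.
  have h₂ : ∀ i ∈ I, ∃ B ⊆ W i, Lg m B ∧ ∀ w ∈ B, ∀ w' ∈ B, ∀ j ∈ I,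
      f w (r j) = f w' (r j) := by
    intro i hi
    have hWX : W i ⊆ X := (hWV i hi).trans (hV i (hI hi)).1
    have hcard : ∀ w ∈ W i, I.powerset.card < w := by
      intro w hw
      have := hs z hz w (hWX hw) ((hV i (hI hi)).2.2 w (hWV i hi hw))
      rw [Finset.card_powerset, hIz]
      exact (Nat.pow_le_pow_left (by norm_num) z).trans_lt this
    obtain ⟨k, -, hk⟩ := pigeonhole m (W i) I.powerset
      (fun w => I.filter fun j => f w (r j) = 0) (hs.mono hWX) hcard
      (fun w _ => Finset.mem_powerset.2 (Finset.filter_subset _ _)) (hWl i hi)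
    refine ⟨_, Finset.filter_subset _ _, hk, ?_⟩
    intro w hw w' hw' j hj
    have hww : (I.filter fun j => f w (r j) = 0) = I.filter fun j => f w' (r j) = 0 :=
      (Finset.mem_filter.1 hw).2.trans (Finset.mem_filter.1 hw').2.symm
    have := congrArg (j ∈ ·) hww
    simp only [Finset.mem_filter, hj, true_and, eq_iff_iff] at this
    omega
  choose! B hBW hBl hBu using h₂
  choose! s hs' using fun i (hi : i ∈ I) => (hBl i hi).nonempty
  have hBV : ∀ i ∈ I, B i ⊆ V i := fun i hi => (hBW i hi).trans (hWV i hi)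
  have hcol : ∀ i ∈ I, ∀ j ∈ I, i < j → ∀ a ∈ B i, ∀ b ∈ B j,
      a < b ∧ f a b = f (s i) (r j) := by
    intro i hi j hj hij a ha b hb
    have haV := hBV i hi ha
    have hl := hlt i (hI hi) j (hI hj) hij a haV
    refine ⟨hl b (hBV j hj hb), ?_⟩
    rw [hWu j hj a ((hV i (hI hi)).1 haV) hl b (hBW j hj hb) (r j) (hr j hj)]
    exact hBu i hi a ha (s i) (hs' i hi) j hj
  have hBX : ∀ i ∈ I, B i ⊆ X ∧ Lg m (B i) := fun i hi =>
    ⟨(hBV i hi).trans (hV i (hI hi)).1, hBl i hi⟩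
  have hpow : 2 ^ (N + N) ≤ I.card := by
    rw [hIz, ← two_mul, pow_mul]
    exact (hN z hz).le
  rcases finite_ramsey (fun i j => f (s i) (r j)) (N + N) N N I rfl hpow with
    ⟨T, hT, hTN, hh⟩ | ⟨T, hT, hTN, hh⟩
  · refine ⟨T, B, 0, hTN, fun i hi => hBX i (hT hi), fun i hi j hj hij a ha b hb => ?_⟩
    have := hcol i (hT hi) j (hT hj) hij a ha b hb
    exact ⟨this.1, this.2.trans (hh i hi j hj hij)⟩
  · refine ⟨T, B, 1, hTN, fun i hi => hBX i (hT hi), fun i hi j hj hij a ha b hb => ?_⟩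
    have := hcol i (hT hi) j (hT hj) hij a ha b hb
    exact ⟨this.1, this.2.trans (hh i hi j hj hij)⟩

/-! ### The induction on the two exponents -/

/-- `X` contains an `f`-homogeneous set of colour `c` satisfying `Lg n`. -/
def Good (f : ℕ → ℕ → Fin 2) (c : Fin 2) (n : ℕ) (X : Finset ℕ) : Prop :=
  ∃ H ⊆ X, Lg n H ∧ ∀ a ∈ H, ∀ b ∈ H, a < b → f a b = c

lemma Good.mono {f : ℕ → ℕ → Fin 2} {c : Fin 2} {n : ℕ} {X Y : Finset ℕ} (h : Good f c n X)
    (hXY : X ⊆ Y) : Good f c n Y := by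
  obtain ⟨H, hH, h⟩ := h
  exact ⟨H, hH.trans hXY, h⟩

/-- A point `x` and `x` later blocks with all crossing pairs of colour `c` assemble homogeneous
sets inside the blocks into one whose exponent is larger by one. -/
lemma good_succ {f : ℕ → ℕ → Fin 2} {c : Fin 2} {n : ℕ} {X : Finset ℕ} {x : ℕ} (hx : x ∈ X)
    {I : Finset ℕ} {B : ℕ → Finset ℕ} (hI : x ≤ I.card)
    (hB : ∀ i ∈ I, B i ⊆ X ∧ Good f c n (B i))
    (hxB : ∀ i ∈ I, ∀ b ∈ B i, x < b ∧ f x b = c)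
    (hBB : ∀ i ∈ I, ∀ j ∈ I, i < j → ∀ a ∈ B i, ∀ b ∈ B j, a < b ∧ f a b = c) :
    Good f c (n + 1) X := by
  have hE : ∀ i ∈ I, Good f c n (B i) := fun i hi => (hB i hi).2
  choose! E hEB hEl hEh using hE
  refine ⟨insert x (I.biUnion E), ?_, ?_, ?_⟩
  · refine Finset.insert_subset hx fun a ha => ?_
    obtain ⟨i, hi, hai⟩ := Finset.mem_biUnion.1 ha
    exact (hB i hi).1 (hEB i hi hai)
  · refine ⟨x, Finset.mem_insert_self _ _, I, E, hI, fun i hi => ⟨?_, hEl i hi, ?_⟩, ?_⟩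
    · exact (Finset.subset_biUnion_of_mem E hi).trans (Finset.subset_insert _ _)
    · exact fun b hb => (hxB i hi b (hEB i hi hb)).1
    · exact fun i hi j hj hij a ha b hb =>
        (hBB i hi j hj hij a (hEB i hi ha) b (hEB j hj hb)).1
  · intro a ha b hb hab
    rcases Finset.mem_insert.1 ha with rfl | ha
    · rcases Finset.mem_insert.1 hb with rfl | hb
      · omega
      · obtain ⟨i, hi, hbi⟩ := Finset.mem_biUnion.1 hb
        exact (hxB i hi b (hEB i hi hbi)).2
    · obtain ⟨i, hi, hai⟩ := Finset.mem_biUnion.1 ha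
      rcases Finset.mem_insert.1 hb with rfl | hb
      · have := (hxB i hi a (hEB i hi hai)).1
        omega
      · obtain ⟨j, hj, hbj⟩ := Finset.mem_biUnion.1 hb
        rcases lt_trichotomy i j with h | rfl | h
        · exact (hBB i hi j hj h a (hEB i hi hai) b (hEB j hj hbj)).2
        · exact hEh i hi a hai b hbj hab
        · have := (hBB j hj i hi h b (hEB j hj hbj) a (hEB i hi hai)).1
          omega

/-- The inductive step, with the exponents for the two colours given by `e`. -/
lemma exists_good_succ (f : ℕ → ℕ → Fin 2) (e : Fin 2 → ℕ) (m : ℕ) {X : Finset ℕ}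
    (hs : Sparse X) (h3 : ∀ x ∈ X, 3 ≤ x) (hl : Lg (2 * (4 * m + 1) + 2) X)
    (ih : ∀ F ⊆ X, Lg m F → ∀ c, Good f c (e c) F) : ∃ c, Good f c (e c + 1) X := by
  obtain ⟨x, hx, I, B, hxI, hB, -⟩ := hl
  have hx3 := h3 x hx
  obtain ⟨i, hi⟩ : I.Nonempty := Finset.card_pos.1 (by omega)
  obtain ⟨hBX, ⟨y, hy, J, V, hyJ, hV, hlt⟩, hxB⟩ := hB i hi
  have hxJ : Fintype.card (Fin 2) * x ≤ J.card := by
    have h₁ := hs x hx y (hBX hy) (hxB y hy)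
    have h₂ : x < 2 ^ x := Nat.lt_two_pow_self
    have h₃ : 4 ^ x = 2 ^ x * 2 ^ x := by rw [← mul_pow]; norm_num
    rw [Fintype.card_fin]
    nlinarith
  have hVX : ∀ j ∈ J, V j ⊆ X := fun j hj => (hV j hj).1.trans hBX
  have hW : ∀ j ∈ J, ∃ W ⊆ V j, Lg (4 * m + 1) W ∧ ∀ u ∈ X, (∀ v ∈ V j, u < v) →
      ∀ w ∈ W, ∀ w' ∈ W, f u w = f u w' := fun j hj =>
    exists_uniform f (4 * m + 1) hs h3 (hVX j hj) (hV j hj).2.1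
  choose! W hWV hWl hWu using hW
  have hWX : ∀ j ∈ J, W j ⊆ X := fun j hj => (hWV j hj).trans (hVX j hj)
  by_cases hA : ∃ j ∈ J, ∀ c : Fin 2, ∃ u ∈ X, (∀ v ∈ V j, u < v) ∧ ∀ w ∈ W j, f u w = c
  · obtain ⟨j, hj, hA⟩ := hA
    choose u huX huV huW using hA
    have hN : ∀ w ∈ W j, 4 ^ (max (u 0) (u 1)) < w := by
      intro w hw
      rcases max_choice (u 0) (u 1) with h | h <;> rw [h]
      · exact hs _ (huX 0) w (hWX j hj hw) (huV 0 w (hWV j hj hw))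
      · exact hs _ (huX 1) w (hWX j hj hw) (huV 1 w (hWV j hj hw))
    obtain ⟨T, D, c, hTN, hD, hDD⟩ := exists_homogeneous_blocks f m _ (hs.mono (hWX j hj))
      (fun w hw => h3 w (hWX j hj hw)) hN (hWl j hj)
    refine ⟨c, good_succ (huX c) (le_trans ?_ hTN) (fun t ht => ?_) (fun t ht b hb => ?_) hDD⟩
    · fin_cases c
      · exact le_max_left _ _
      · exact le_max_right _ _
    · have := (hD t ht).1.trans (hWX j hj)
      exact ⟨this, ih _ this (hD t ht).2 c⟩
    · have hb' := (hD t ht).1 hb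
      exact ⟨huV c b (hWV j hj hb'), huW c b hb'⟩
  · push Not at hA
    choose! d hd using hA
    -- Nothing below `W j` is joined to `W j` in colour `d j`.
    have hd' : ∀ j ∈ J, ∀ u ∈ X, (∀ v ∈ V j, u < v) → ∀ w ∈ W j, f u w ≠ d j := by
      intro j hj u hu huV w hw
      obtain ⟨w', hw', hne⟩ := hd j hj u hu huV
      rwa [hWu j hj u hu huV w hw w' hw']
    obtain ⟨k, -, hk⟩ := Finset.exists_le_card_fiber_of_mul_le_card_of_maps_to
      (s := J) (t := Finset.univ) (f := d) (fun _ _ => Finset.mem_univ _) Finset.univ_nonempty hxJ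
    have hflip : ∀ a : Fin 2, a ≠ k → a = 1 - k := by
      intro a ha
      omega
    have hK : ∀ j ∈ J.filter (fun j => d j = k), j ∈ J ∧ d j = k := fun j hj =>
      Finset.mem_filter.1 hj
    refine ⟨1 - k, good_succ hx hk (B := W) (fun j hj => ?_) (fun j hj b hb => ?_)
      (fun j hj j' hj' hjj a ha b hb => ?_)⟩
    · obtain ⟨hj, -⟩ := hK j hj
      refine ⟨hWX j hj, ih _ (hWX j hj) ?_ _⟩
      exact (hWl j hj).of_le (fun w hw => h3 w (hWX j hj hw)) (by omega)
    · obtain ⟨hj, hdk⟩ := hK j hj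
      have hxV : ∀ v ∈ V j, x < v := fun v hv => hxB v ((hV j hj).1 hv)
      exact ⟨hxV b (hWV j hj hb), hflip _ (hdk ▸ hd' j hj x hx hxV b hb)⟩
    · obtain ⟨hj, -⟩ := hK j hj
      obtain ⟨hj', hdk⟩ := hK j' hj'
      have haV := hlt j hj j' hj' hjj a (hWV j hj ha)
      exact ⟨haV b (hWV j' hj' hb), hflip _ (hdk ▸ hd' j' hj' a (hWX j hj ha) haV b hb)⟩

lemma good_zero {f : ℕ → ℕ → Fin 2} {c : Fin 2} {X : Finset ℕ} (h : X.Nonempty) :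
    Good f c 0 X := by
  obtain ⟨x, hx⟩ := h
  refine ⟨{x}, by simpa using hx, ⟨x, by simp⟩, fun a ha b hb hab => ?_⟩
  simp only [Finset.mem_singleton] at ha hb
  omega

lemma ramsey_sparse (a b : ℕ) : ∃ m : ℕ, ∀ (f : ℕ → ℕ → Fin 2) (X : Finset ℕ), Sparse X →
    (∀ x ∈ X, 3 ≤ x) → Lg m X → Good f 0 a X ∨ Good f 1 b X := by
  induction a generalizing b with
  | zero => exact ⟨0, fun f X _ _ h => Or.inl (good_zero h)⟩
  | succ a iha =>
    induction b with
    | zero => exact ⟨0, fun f X _ _ h => Or.inr (good_zero h)⟩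
    | succ b ihb =>
      obtain ⟨m₁, h₁⟩ := iha (b + 1)
      obtain ⟨m₂, h₂⟩ := ihb
      refine ⟨2 * (4 * max m₁ m₂ + 1) + 2, fun f X hs h3 hl => ?_⟩
      by_contra! hcon
      obtain ⟨c, hc⟩ := exists_good_succ f ![a, b] (max m₁ m₂) hs h3 hl (by
        intro F hF hlF c
        have h3F : ∀ x ∈ F, 3 ≤ x := fun x hx => h3 x (hF hx)
        have hF₁ := h₁ f F (hs.mono hF) h3F (hlF.of_le h3F (le_max_left _ _))
        have hF₂ := h₂ f F (hs.mono hF) h3F (hlF.of_le h3F (le_max_right _ _))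
        fin_cases c
        · exact hF₁.resolve_right fun h => hcon.2 (h.mono hF)
        · exact hF₂.resolve_left fun h => hcon.1 (h.mono hF))
      fin_cases c
      · exact hcon.1 hc
      · exact hcon.2 hc

/-- **Finite Ramsey theorem for pairs in terms of α-largeness.** For every `n`
there exists `m` such that: for every finite `X ⊆ ℕ` with `min X ≥ 3`, if `X`
is `ω^m`-large, then every colouring `f : [X]² → 2` has an `ω^n`-large
homogeneous subset `H ⊆ X`.  (A colouring of pairs is given as a function
`f : ℕ → ℕ → Fin 2` evaluated on pairs `a < b`.) -/
theorem finite_ramsey_pairs_alphaLarge :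
    ∀ n : ℕ, ∃ m : ℕ, ∀ X : Finset ℕ, (∀ x ∈ X, 3 ≤ x) →
      IsAlphaLarge [m] X →
      ∀ f : ℕ → ℕ → Fin 2,
        ∃ H ⊆ X, IsAlphaLarge [n] H ∧
          ∃ c : Fin 2, ∀ a ∈ H, ∀ b ∈ H, a < b → f a b = c := by
  intro n
  obtain ⟨m, hm⟩ := ramsey_sparse n n
  refine ⟨2 * m + 3, fun X h3 hX f => ?_⟩
  obtain ⟨Y, hYX, hYs, hYl⟩ := exists_sparse m X h3 (lg_of_isAlphaLarge hX)
  obtain ⟨c, H, hH, hHl, hHh⟩ : ∃ c, Good f c n Y :=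
    (hm f Y hYs (fun y hy => h3 y (hYX hy)) hYl).elim (fun h => ⟨0, h⟩) fun h => ⟨1, h⟩
  obtain ⟨H', hH', hl⟩ := exists_isAlphaLarge_of_lg hHl
  exact ⟨H', hH'.trans (hH.trans hYX), hl, c, fun a ha b hb => hHh a (hH' ha) b (hH' hb)⟩
end
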